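/- For every projection game G, the value and collision value satisfy val(G) ≤ ‖G‖ and ‖G‖² ≤ val(G) (equivalently, val(G) ≤ ‖G‖ ≤ val(G)^{1/2}). -/

import Mathlib

open Finset

/-- A projection game: finite nonempty question sets `Q1` (Alice) and `Q2` (Bob),
a finite nonempty alphabet `A`, and a probability mass function `μ` on triples
`(u, v, π)` where `π : A → Option A` encodes a projection constraint
(the answer pair `(α, β)` satisfies `π` iff `π β = some α`). -/
structure ProjGame where
  Q1 : Type
  Q2 : Type
  A : Type
  [fQ1 : Fintype Q1]
  [fQ2 : Fintype Q2]
  [fA : Fintype A]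
  [neQ1 : Nonempty Q1]
  [neQ2 : Nonempty Q2]
  [neA : Nonempty A]
  [dQ1 : DecidableEq Q1]
  [dQ2 : DecidableEq Q2]
  [dA : DecidableEq A]
  μ : Q1 × Q2 × (A → Option A) → ℝ
  μ_nonneg : ∀ x, 0 ≤ μ x
  μ_sum : ∑ x, μ x = 1

attribute [instance] ProjGame.fQ1 ProjGame.fQ2 ProjGame.fA
  ProjGame.neQ1 ProjGame.neQ2 ProjGame.neA ProjGame.dQ1 ProjGame.dQ2 ProjGame.dA

namespace ProjGame

variable (G : ProjGame)

/-- The `U`-marginal (Alice-side marginal) of `μ`. -/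
noncomputable def wU (u : G.Q1) : ℝ := ∑ v, ∑ π, G.μ (u, v, π)

/-- The `V`-marginal (Bob-side marginal) of `μ`. -/
noncomputable def wV (v : G.Q2) : ℝ := ∑ u, ∑ π, G.μ (u, v, π)

/-- The game operator: `(Gf)(u,α) = E_{(v,π)|u} [∑_{β : π β = some α} f (v,β)]`. -/
noncomputable def op (f : G.Q2 × G.A → ℝ) : G.Q1 × G.A → ℝ :=
  fun p =>
    (∑ v, ∑ π, G.μ (p.1, v, π) * ∑ β, if π β = some p.2 then f (v, β) else 0) / G.wU p.1

/-- Squared norm on functions on `U × Σ`: `‖g‖² = E_u [∑_α g(u,α)²]`. -/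
noncomputable def normUsq (g : G.Q1 × G.A → ℝ) : ℝ := ∑ u, G.wU u * ∑ α, (g (u, α)) ^ 2

/-- Squared norm on functions on `V × Σ`: `‖f‖² = E_v [∑_β f(v,β)²]`. -/
noncomputable def normVsq (f : G.Q2 × G.A → ℝ) : ℝ := ∑ v, G.wV v * ∑ β, (f (v, β)) ^ 2

/-- Inner product `⟨g, g'⟩ = E_u [∑_α g(u,α) g'(u,α)]`. -/
noncomputable def inn (g g' : G.Q1 × G.A → ℝ) : ℝ :=
  ∑ u, G.wU u * ∑ α, g (u, α) * g' (u, α)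

/-- An assignment for Bob. -/
def IsBob (f : G.Q2 × G.A → ℝ) : Prop := (∀ p, 0 ≤ f p) ∧ ∀ v, ∑ β, f (v, β) = 1

/-- An assignment for Alice. -/
def IsAlice (g : G.Q1 × G.A → ℝ) : Prop := (∀ p, 0 ≤ g p) ∧ ∀ u, ∑ α, g (u, α) = 1

/-- The value of the game: `val(G) = max ⟨g, Gf⟩` over assignments. -/
noncomputable def val : ℝ :=
  sSup { x | ∃ f g, G.IsBob f ∧ G.IsAlice g ∧ x = G.inn g (G.op f) }

/-- The collision value `‖G‖ = max_f ‖Gf‖` over assignments `f` for Bob. -/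
noncomputable def collVal : ℝ :=
  sSup { x | ∃ f, G.IsBob f ∧ x = Real.sqrt (G.normUsq (G.op f)) }

/-- Product of projection constraints. -/
def tensorC {A A' : Type} (π : A → Option A) (π' : A' → Option A') :
    A × A' → Option (A × A') :=
  fun b => (π b.1).bind fun a => (π' b.2).map fun a' => (a, a')

/-- The product (parallel repetition) of two projection games. -/
noncomputable def tensor (G H : ProjGame) : ProjGame where
  Q1 := G.Q1 × H.Q1
  Q2 := G.Q2 × H.Q2
  A := G.A × H.A
  μ := fun x =>
    ∑ y : (G.Q1 × G.Q2 × (G.A → Option G.A)) × (H.Q1 × H.Q2 × (H.A → Option H.A)),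
      if ((y.1.1, y.2.1), (y.1.2.1, y.2.2.1), tensorC y.1.2.2 y.2.2.2) = x
      then G.μ y.1 * H.μ y.2 else 0
  μ_nonneg := by
    intro x
    refine Finset.sum_nonneg fun y _ => ?_
    split
    · exact mul_nonneg (G.μ_nonneg _) (H.μ_nonneg _)
    · exact le_refl 0
  μ_sum := by
    rw [Finset.sum_comm]
    simp only [Finset.sum_ite_eq, Finset.mem_univ, if_true]
    rw [Fintype.sum_prod_type]
    calc (∑ y1, ∑ y2, G.μ y1 * H.μ y2)
        = (∑ y1, G.μ y1) * (∑ y2, H.μ y2) := by rw [Finset.sum_mul_sum]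
      _ = 1 := by rw [G.μ_sum, H.μ_sum, mul_one]

/-- `G.iterTensor k` is the `(k+1)`-fold parallel repetition `G^{⊗(k+1)}`. -/
noncomputable def iterTensor (G : ProjGame) : ℕ → ProjGame
  | 0 => G
  | n + 1 => G.tensor (G.iterTensor n)

/-- `val₊(G)`: supremum of values of vector assignments. -/
noncomputable def valPlus (G : ProjGame) : ℝ :=
  sSup { x | ∃ n : ℕ, 0 < n ∧ ∃ f : G.Q2 × G.A → Fin n → ℝ,
    (∀ p i, 0 ≤ f p i) ∧
    (∀ v, Real.sqrt (∑ i, (∑ β, f (v, β) i) ^ 2) ≤ 1) ∧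
    x = Real.sqrt (∑ u, G.wU u * ∑ α, ∑ i, (G.op (fun q => f q i) (u, α)) ^ 2) }

/-- `‖Th‖² = E_v [(∑_β h(v,β))²]`. -/
noncomputable def Tnormsq (G : ProjGame) (h : G.Q2 × G.A → ℝ) : ℝ :=
  ∑ v, G.wV v * (∑ β, h (v, β)) ^ 2

/-- `λ₊(G)`: supremum of `‖Gh‖/‖Th‖` over nonnegative `h` with `‖Th‖ > 0`. -/
noncomputable def lambdaPlus (G : ProjGame) : ℝ :=
  sSup { x | ∃ h : G.Q2 × G.A → ℝ, (∀ p, 0 ≤ h p) ∧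
    0 < Real.sqrt (G.Tnormsq h) ∧
    x = Real.sqrt (G.normUsq (G.op h)) / Real.sqrt (G.Tnormsq h) }

/-- The symmetrized distribution on `V × V` (with the constraints marginalized out). -/
noncomputable def msym (G : ProjGame) (v v' : G.Q2) : ℝ :=
  ∑ u, ((∑ π, G.μ (u, v, π)) * (∑ π', G.μ (u, v', π'))) / G.wU u

/-- `G` is `γ`-expanding: the Markov operator of the symmetrized constraint graph has
spectral gap at least `γ`, i.e. `|⟨x, Ax⟩| ≤ (1-γ) E_v[x(v)²]` for mean-zero `x`. -/
def IsExpanding (G : ProjGame) (γ : ℝ) : Prop :=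
  ∀ x : G.Q2 → ℝ, (∑ v, G.wV v * x v) = 0 →
    |∑ v, ∑ v', G.msym v v' * x v * x v'| ≤ (1 - γ) * ∑ v, G.wV v * (x v) ^ 2

/-- The symmetrized distribution on `(v, v', π, π')`. -/
noncomputable def msymFull (G : ProjGame) (v v' : G.Q2) (π π' : G.A → Option G.A) : ℝ :=
  ∑ u, (G.μ (u, v, π) * G.μ (u, v', π')) / G.wU u

/-- The value of the assignment `x` in the symmetrized game `G_sym`. -/
noncomputable def symValAssign (G : ProjGame) (x : G.Q2 → G.A) : ℝ :=
  ∑ v, ∑ v', ∑ π, ∑ π', G.msymFull v v' π π' *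
    (if ∃ α, π (x v) = some α ∧ π' (x v') = some α then 1 else 0)

/-- The value of the symmetrized game `G_sym`. -/
noncomputable def symVal (G : ProjGame) : ℝ :=
  sSup { r | ∃ x : G.Q2 → G.A, r = G.symValAssign x }

end ProjGame

namespace ProjGame

lemma wU_nonneg (G : ProjGame) (u : G.Q1) : 0 ≤ G.wU u :=
  Finset.sum_nonneg fun _ _ => Finset.sum_nonneg fun _ _ => G.μ_nonneg _

lemma wU_sum (G : ProjGame) : ∑ u, G.wU u = 1 := by
  rw [← G.μ_sum, Fintype.sum_prod_type]
  refine Finset.sum_congr rfl fun u _ => ?_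
  rw [Fintype.sum_prod_type]
  rfl

lemma op_nonneg (G : ProjGame) {f : G.Q2 × G.A → ℝ} (hf : G.IsBob f) (p) : 0 ≤ G.op f p := by
  refine div_nonneg (Finset.sum_nonneg fun v _ => Finset.sum_nonneg fun π _ =>
    mul_nonneg (G.μ_nonneg _) (Finset.sum_nonneg fun β _ => ?_)) (G.wU_nonneg _)
  split
  · exact hf.1 _
  · exact le_rfl

lemma op_sum_le (G : ProjGame) {f : G.Q2 × G.A → ℝ} (hf : G.IsBob f) (u : G.Q1) :
    ∑ α, G.op f (u, α) ≤ 1 := by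
  unfold op
  dsimp only
  rw [← Finset.sum_div]
  refine div_le_one_of_le₀ ?_ (G.wU_nonneg _)
  rw [Finset.sum_comm]
  refine Finset.sum_le_sum fun v _ => ?_
  rw [Finset.sum_comm]
  refine Finset.sum_le_sum fun π _ => ?_
  rw [← Finset.mul_sum]
  refine mul_le_of_le_one_right (G.μ_nonneg _) ?_
  rw [Finset.sum_comm, ← hf.2 v]
  refine Finset.sum_le_sum fun β _ => ?_
  cases h : π β with
  | none => simpa using hf.1 _
  | some a => simp

lemma inn_sq_le (G : ProjGame) {g h : G.Q1 × G.A → ℝ} (hg : G.IsAlice g) :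
    (G.inn g h) ^ 2 ≤ G.normUsq h := by
  have h2 := Real.pow_arith_mean_le_arith_mean_pow_of_even Finset.univ G.wU
    (fun u => ∑ α, g (u, α) * h (u, α)) (fun u _ => G.wU_nonneg u) G.wU_sum (n := 2) even_two
  refine h2.trans (Finset.sum_le_sum fun u _ => mul_le_mul_of_nonneg_left ?_ (G.wU_nonneg u))
  refine (Finset.sum_mul_sq_le_sq_mul_sq _ _ _).trans ?_
  refine mul_le_of_le_one_left (Finset.sum_nonneg fun _ _ => sq_nonneg _) ?_
  rw [← hg.2 u]
  refine Finset.sum_le_sum fun α _ => ?_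
  have h3 : g (u, α) ≤ 1 := by
    rw [← hg.2 u]
    exact Finset.single_le_sum (f := fun α => g (u, α)) (fun a _ => hg.1 (u, a))
      (Finset.mem_univ α)
  nlinarith [hg.1 (u, α)]

lemma exists_alice (G : ProjGame) {f : G.Q2 × G.A → ℝ} (hf : G.IsBob f) :
    ∃ g, G.IsAlice g ∧ ∀ p, G.op f p ≤ g p := by
  have a0 : G.A := Classical.arbitrary _
  have hs : ∀ u, 0 ≤ 1 - ∑ α, G.op f (u, α) := fun u => sub_nonneg.2 (G.op_sum_le hf u)
  have hle : ∀ p : G.Q1 × G.A, G.op f p ≤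
      G.op f p + if p.2 = a0 then 1 - ∑ α, G.op f (p.1, α) else 0 := by
    intro p
    have := hs p.1
    split <;> linarith
  refine ⟨fun p => G.op f p + if p.2 = a0 then 1 - ∑ α, G.op f (p.1, α) else 0,
    ⟨fun p => (G.op_nonneg hf p).trans (hle p), fun u => ?_⟩, hle⟩
  simp [Finset.sum_add_distrib]

lemma normUsq_le_inn (G : ProjGame) {f g} (hf : G.IsBob f) (hg : ∀ p, G.op f p ≤ g p) :
    G.normUsq (G.op f) ≤ G.inn g (G.op f) := by
  refine Finset.sum_le_sum fun u _ => mul_le_mul_of_nonneg_left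
    (Finset.sum_le_sum fun α _ => ?_) (G.wU_nonneg u)
  rw [sq]
  exact mul_le_mul_of_nonneg_right (hg _) (G.op_nonneg hf _)

lemma normUsq_nonneg (G : ProjGame) (h) : 0 ≤ G.normUsq h :=
  Finset.sum_nonneg fun u _ => mul_nonneg (G.wU_nonneg u) (Finset.sum_nonneg fun _ _ => sq_nonneg _)

lemma normUsq_le_one (G : ProjGame) {f} (hf : G.IsBob f) : G.normUsq (G.op f) ≤ 1 := by
  obtain ⟨g, hg, h⟩ := G.exists_alice hf
  have h1 := G.normUsq_le_inn hf h
  have h2 := G.inn_sq_le (h := G.op f) hg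
  have h3 := G.normUsq_nonneg (G.op f)
  nlinarith

lemma exists_bob (G : ProjGame) : ∃ f, G.IsBob f := by
  have a0 : G.A := Classical.arbitrary _
  refine ⟨fun p => if p.2 = a0 then 1 else 0, fun p => ?_, fun v => by simp⟩
  dsimp only
  split <;> norm_num

end ProjGame

/-- The value and collision value satisfy `val(G) ≤ ‖G‖` and `‖G‖² ≤ val(G)`. -/
theorem val_le_collVal_le_sqrt_val (G : ProjGame) :
    G.val ≤ G.collVal ∧ G.collVal ^ 2 ≤ G.val := by
  obtain ⟨f0, hf0⟩ := G.exists_bob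
  obtain ⟨g0, hg0, hh0⟩ := G.exists_alice hf0
  have bc : BddAbove { x | ∃ f, G.IsBob f ∧ x = Real.sqrt (G.normUsq (G.op f)) } := by
    refine ⟨1, ?_⟩
    rintro x ⟨f, hf, rfl⟩
    exact Real.sqrt_le_one.2 (G.normUsq_le_one hf)
  have bv : BddAbove { x | ∃ f g, G.IsBob f ∧ G.IsAlice g ∧ x = G.inn g (G.op f) } := by
    refine ⟨1, ?_⟩
    rintro x ⟨f, g, hf, hg, rfl⟩
    have h1 := G.normUsq_le_one hf
    have h2 := G.inn_sq_le (h := G.op f) hg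
    nlinarith
  have key : ∀ f, G.IsBob f → G.normUsq (G.op f) ≤ G.val := by
    intro f hf
    obtain ⟨g, hg, h⟩ := G.exists_alice hf
    exact (G.normUsq_le_inn hf h).trans (le_csSup bv ⟨f, g, hf, hg, rfl⟩)
  constructor
  · refine csSup_le ⟨_, f0, g0, hf0, hg0, rfl⟩ ?_
    rintro x ⟨f, g, hf, hg, rfl⟩
    exact (Real.le_sqrt_of_sq_le (G.inn_sq_le hg)).trans (le_csSup bc ⟨f, hf, rfl⟩)
  · have h1 : G.collVal ≤ Real.sqrt G.val := by
      refine csSup_le ⟨_, f0, hf0, rfl⟩ ?_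
      rintro x ⟨f, hf, rfl⟩
      exact Real.sqrt_le_sqrt (key f hf)
    have h0 : 0 ≤ G.collVal := (Real.sqrt_nonneg _).trans (le_csSup bc ⟨f0, hf0, rfl⟩)
    have hv : 0 ≤ G.val := (G.normUsq_nonneg _).trans (key f0 hf0)
    calc G.collVal ^ 2 ≤ (Real.sqrt G.val) ^ 2 := pow_le_pow_left₀ h0 h1 2
      _ = G.val := Real.sq_sqrt hv
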